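/- arXiv:2408.00422 — 2 statements merged into one kernel-verified Lean document; each statement's English description precedes it below -/
import Mathlib

section
/- Let n ≥ 1, let A ∈ ℝ^{n×n} be a symmetric matrix with nonnegative entries, let ε_k → 0⁺, and let C > 0. If u_k ∈ ℝⁿ is a sequence with GL^A_{ε_k}(u_k) ≤ C for all k, then there exist a subsequence (u_{k_j}) and a vector u_∞ ∈ {−1,1}ⁿ such that u_{k_j} → u_∞ in ℝⁿ. -/
/-!
The Dirichlet term is nonnegative, so `GL^A_ε(u) ≤ C` forces `∑ i, Φ(u_i) ≤ ε n C`. Hence the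
total potential tends to zero along the sequence. It is continuous with compact sublevel sets, so
a subsequence converges to one of its zeros, and these are exactly the vectors in `{−1,1}ⁿ`.
-/

open MeasureTheory Filter

noncomputable section

/-- The double-well potential `Φ(s) = (s² − 1)²`. -/
def Phi (s : ℝ) : ℝ := (s ^ 2 - 1) ^ 2

/-- The graph Ginzburg–Landau functional
`GL^A_ε(u) = (1/n²) Σ_{i,j} A_{ij}(u_i−u_j)² + (1/(εn)) Σ_i Φ(u_i)`. -/
def glGraph (n : ℕ) (A : Fin n → Fin n → ℝ) (ε : ℝ) (u : Fin n → ℝ) : ℝ :=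
  (1 / (n : ℝ) ^ 2) * ∑ i : Fin n, ∑ j : Fin n, A i j * (u i - u j) ^ 2
    + (1 / (ε * n)) * ∑ i : Fin n, Phi (u i)

theorem exists_subseq_tendsto_of_isCompact_sublevel {X β : Type*} [TopologicalSpace X]
    [FirstCountableTopology X] [TopologicalSpace β] [LinearOrder β] [DenselyOrdered β]
    [OrderTopology β] {f : X → β} (hf : LowerSemicontinuous f) {c r : β} (hcr : c < r)
    (hcompact : IsCompact {x | f x ≤ r}) {u : ℕ → X}
    (hu : Tendsto (fun k => f (u k)) atTop (nhds c)) :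
    ∃ φ : ℕ → ℕ, StrictMono φ ∧ ∃ x, f x ≤ c ∧ Tendsto (fun j => u (φ j)) atTop (nhds x) := by
  have hmem : ∀ᶠ k in atTop, u k ∈ {x | f x ≤ r} := hu.eventually_le_const hcr
  obtain ⟨x, -, φ, hφ, hx⟩ := hcompact.tendsto_subseq' hmem.frequently
  refine ⟨φ, hφ, x, le_of_forall_lt_imp_le_of_dense fun y hy => ?_, hx⟩
  have hlt : ∀ᶠ j in atTop, y < f (u (φ j)) := hx.eventually (hf x y hy)
  exact ge_of_tendsto (hu.comp hφ.tendsto_atTop) (hlt.mono fun _ => le_of_lt)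

theorem Phi_nonneg (s : ℝ) : 0 ≤ Phi s := sq_nonneg _

theorem Phi_eq_zero_iff {s : ℝ} : Phi s = 0 ↔ s = 1 ∨ s = -1 := by
  rw [Phi, sq_eq_zero_iff, sub_eq_zero, sq_eq_one_iff]

theorem continuous_Phi : Continuous Phi := by
  unfold Phi
  fun_prop

theorem sq_le_Phi_add_two (s : ℝ) : s ^ 2 ≤ Phi s + 2 := by
  unfold Phi
  nlinarith [sq_nonneg (s ^ 2 - 2)]

theorem isCompact_Phi_sublevel (r : ℝ) : IsCompact {s | Phi s ≤ r} := by
  refine isCompact_Icc.of_isClosed_subset (isClosed_le continuous_Phi continuous_const)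
    (fun s (hs : Phi s ≤ r) => abs_le.mp (?_ : |s| ≤ √(r + 2)))
  exact Real.abs_le_sqrt ((sq_le_Phi_add_two s).trans (by gcongr))

section TotalPotential

variable {ι : Type*} [Fintype ι]

/-- The unscaled potential part `∑ i, Φ(u_i)` of the Ginzburg–Landau functional. -/
def totalPotential (u : ι → ℝ) : ℝ := ∑ i, Phi (u i)

theorem totalPotential_nonneg (u : ι → ℝ) : 0 ≤ totalPotential u :=
  Finset.sum_nonneg fun _ _ => Phi_nonneg _

theorem Phi_le_totalPotential (u : ι → ℝ) (i : ι) : Phi (u i) ≤ totalPotential u :=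
  Finset.single_le_sum (f := fun i => Phi (u i)) (fun _ _ => Phi_nonneg _) (Finset.mem_univ i)

theorem continuous_totalPotential : Continuous (totalPotential : (ι → ℝ) → ℝ) :=
  continuous_finsetSum _ fun i _ => continuous_Phi.comp (continuous_apply i)

theorem isCompact_totalPotential_sublevel (r : ℝ) :
    IsCompact {u : ι → ℝ | totalPotential u ≤ r} :=
  (isCompact_univ_pi fun _ => isCompact_Phi_sublevel r).of_isClosed_subset
    (isClosed_le continuous_totalPotential continuous_const)
    fun u hu i _ => (Phi_le_totalPotential u i).trans hu

theorem eq_one_or_eq_neg_one_of_totalPotential_nonpos {u : ι → ℝ} (hu : totalPotential u ≤ 0)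
    (i : ι) : u i = 1 ∨ u i = -1 :=
  Phi_eq_zero_iff.mp (le_antisymm ((Phi_le_totalPotential u i).trans hu) (Phi_nonneg _))

end TotalPotential

theorem totalPotential_le_mul_glGraph {n : ℕ} (hn : 1 ≤ n) {A : Fin n → Fin n → ℝ}
    (hA : ∀ i j, 0 ≤ A i j) {ε : ℝ} (hε : 0 < ε) (u : Fin n → ℝ) :
    totalPotential u ≤ ε * n * glGraph n A ε u := by
  have hεn : 0 < ε * n := mul_pos hε (Nat.cast_pos.mpr hn)
  have hdirichlet : 0 ≤ 1 / (n : ℝ) ^ 2 * ∑ i, ∑ j, A i j * (u i - u j) ^ 2 :=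
    mul_nonneg (by positivity) (Finset.sum_nonneg fun i _ => Finset.sum_nonneg fun j _ =>
      mul_nonneg (hA i j) (sq_nonneg _))
  calc totalPotential u = ε * n * (1 / (ε * n) * ∑ i, Phi (u i)) := by
        rw [← mul_assoc, mul_one_div_cancel hεn.ne', one_mul, totalPotential]
    _ ≤ ε * n * glGraph n A ε u :=
        mul_le_mul_of_nonneg_left (le_add_of_nonneg_left hdirichlet) hεn.le

theorem tendsto_totalPotential_of_glGraph_le {n : ℕ} (hn : 1 ≤ n)
    {A : ℕ → Fin n → Fin n → ℝ} (hA : ∀ k i j, 0 ≤ A k i j) {ε : ℕ → ℝ}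
    (hεpos : ∀ k, 0 < ε k) (hε : Tendsto ε atTop (nhds 0)) {C : ℝ} {u : ℕ → Fin n → ℝ}
    (hu : ∀ k, glGraph n (A k) (ε k) (u k) ≤ C) :
    Tendsto (fun k => totalPotential (u k)) atTop (nhds 0) := by
  have hbound (k : ℕ) : totalPotential (u k) ≤ ε k * n * C :=
    (totalPotential_le_mul_glGraph hn (hA k) (hεpos k) (u k)).trans
      (mul_le_mul_of_nonneg_left (hu k) (mul_nonneg (hεpos k).le n.cast_nonneg))
  have hlim : Tendsto (fun k => ε k * n * C) atTop (nhds 0) := by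
    simpa only [zero_mul] using (hε.mul_const (n : ℝ)).mul_const C
  exact squeeze_zero (fun k => totalPotential_nonneg (u k)) hbound hlim

theorem graphGL_compactness_general
    (n : ℕ) (hn : 1 ≤ n) (A : ℕ → Fin n → Fin n → ℝ) (hA : ∀ k i j, 0 ≤ A k i j)
    (ε : ℕ → ℝ) (hεpos : ∀ k, 0 < ε k) (hε : Tendsto ε atTop (nhds 0))
    (C : ℝ) (u : ℕ → Fin n → ℝ) (hu : ∀ k, glGraph n (A k) (ε k) (u k) ≤ C) :
    ∃ φ : ℕ → ℕ, StrictMono φ ∧ ∃ v : Fin n → ℝ, (∀ i, v i = 1 ∨ v i = -1) ∧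
      Tendsto (fun j => u (φ j)) atTop (nhds v) := by
  obtain ⟨φ, hφ, v, hv, hlim⟩ := exists_subseq_tendsto_of_isCompact_sublevel
    continuous_totalPotential.lowerSemicontinuous zero_lt_one
    (isCompact_totalPotential_sublevel 1)
    (tendsto_totalPotential_of_glGraph_le hn hA hεpos hε hu)
  exact ⟨φ, hφ, v, eq_one_or_eq_neg_one_of_totalPotential_nonpos hv, hlim⟩

/-- Compactness: a sequence with uniformly bounded Ginzburg–Landau energies (along `ε_k → 0⁺`)
has a subsequence converging to a vector with values in `{−1,1}`. -/
theorem graphGL_compactness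
    (n : ℕ) (hn : 1 ≤ n) (A : Fin n → Fin n → ℝ)
    (hsymm : ∀ i j, A i j = A j i) (hA : ∀ i j, 0 ≤ A i j)
    (ε : ℕ → ℝ) (hεpos : ∀ k, 0 < ε k) (hε : Tendsto ε atTop (nhds 0))
    (C : ℝ) (hC : 0 < C) (u : ℕ → Fin n → ℝ)
    (hu : ∀ k, glGraph n A (ε k) (u k) ≤ C) :
    ∃ φ : ℕ → ℕ, StrictMono φ ∧ ∃ v : Fin n → ℝ, (∀ i, v i = 1 ∨ v i = -1) ∧
      Tendsto (fun j => u (φ j)) atTop (nhds v) := by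
  exact graphGL_compactness_general n hn (fun _ => A) (fun _ => hA) ε hεpos hε C u hu
end
end

section
/- Let W_n, W ∈ L¹((0,1)²) be nonnegative and symmetric with sup_n ‖W_n‖_{L¹} < ∞ and ‖W_n − W‖_□ → 0, and let u_n : (0,1) → ℝ be measurable functions with sup_n ‖u_n‖_{L^∞} < ∞ such that the Young measures δ_{u_n} converge narrowly to a Young measure ν. Then the graph Dirichlet energies converge to the graphon Dirichlet energy: ∫₀¹∫₀¹ W_n(x,y) |u_n(x) − u_n(y)|² dx dy → ∫₀¹∫₀¹ W(x,y) ∫_ℝ∫_ℝ |λ−μ|² dν_x(λ) dν_y(μ) dx dy. -/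
open MeasureTheory Filter

noncomputable section

/-- The open unit interval `(0,1)` as a subset of `ℝ`. -/
def I01 : Set ℝ := Set.Ioo 0 1

/-- A Young measure on `(0,1)`: a measurable family of Borel probability measures on `ℝ`
(a Markov kernel from `(0,1)` to `ℝ`). -/
def IsYoungMeasure (ν : ℝ → Measure ℝ) : Prop :=
  Measurable ν ∧ ∀ x, IsProbabilityMeasure (ν x)

/-- The Young measure associated with a measurable function `u`: `(δ_u)_x = δ_{u(x)}`. -/
def deltaYM (u : ℝ → ℝ) : ℝ → Measure ℝ := fun x => Measure.dirac (u x)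

/-- Narrow convergence of Young measures. -/
def NarrowConv (ν : ℕ → ℝ → Measure ℝ) (μ : ℝ → Measure ℝ) : Prop :=
  ∀ f : ℝ → ℝ, Continuous f → (∃ C, ∀ s, |f s| ≤ C) →
    ∀ g : ℝ → ℝ, IntegrableOn g I01 →
      Tendsto (fun n => ∫ x in I01, g x * ∫ t, f t ∂(ν n x)) atTop
        (nhds (∫ x in I01, g x * ∫ t, f t ∂(μ x)))

/-- The cut norm of a kernel `V ∈ L¹((0,1)²)`. -/
def cutNorm (V : ℝ → ℝ → ℝ) : ℝ :=
  sSup {r : ℝ | ∃ f g : ℝ → ℝ, Measurable f ∧ Measurable g ∧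
    (∀ x, f x ∈ Set.Icc (-1 : ℝ) 1) ∧ (∀ x, g x ∈ Set.Icc (-1 : ℝ) 1) ∧
    r = |∫ x in I01, ∫ y in I01, V x y * f x * g y|}

/-! Narrow convergence of `δ_{u_n}` to `ν`, together with the uniform bound on `u_n`, says that
`f ∘ u_n` converges weakly-* in `L^∞(0,1)` to `x ↦ ∫ f dν_x` for every continuous `f`. A product of
weakly-* convergent sequences need not converge, but here the two factors live on different
variables: the integral operator of an `L¹` kernel `W` turns weak-* convergence of `b_n` into `L¹`
convergence of `∫ W(x, y) b_n(y) dy`, which may be paired with a second weakly-* convergent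
sequence. Replacing `W_n` by `W` costs at most the cut norm of `W_n - W` times the uniform bounds.
Since `|s - t|² = s² + t² - 2st`, the Dirichlet energy is a combination of three such bilinear
terms. -/

/-- Weak-* convergence of `a i` to `a₀` in `L^∞(μ) = L¹(μ)*`, for functions rather than classes
modulo null sets. -/
def TendstoWeakStar {ι α : Type*} [MeasurableSpace α] (μ : Measure α) (a : ι → α → ℝ)
    (l : Filter ι) (a₀ : α → ℝ) : Prop :=
  ∀ g : α → ℝ, Integrable g μ →
    Tendsto (fun i => ∫ x, g x * a i x ∂μ) l (nhds (∫ x, g x * a₀ x ∂μ))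

/-- The bilinear form `(f, g) ↦ ∬ V(x, y) f(x) g(y) dν(y) dμ(x)` of a kernel `V`. For Lebesgue
measure on `(0,1)`, the cut norm of `V` is the norm of this form on `L^∞ × L^∞`. -/
def kernelForm {α β : Type*} [MeasurableSpace α] [MeasurableSpace β] (μ : Measure α)
    (ν : Measure β) (V : α → β → ℝ) (f : α → ℝ) (g : β → ℝ) : ℝ :=
  ∫ x, ∫ y, V x y * f x * g y ∂ν ∂μ

section General

variable {ι α β : Type*} [MeasurableSpace α] [MeasurableSpace β] {μ : Measure α} {ν : Measure β}
  {l : Filter ι} {V V' : α → β → ℝ}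

lemma abs_integral_mul_le {f g : α → ℝ} {A : ℝ} (hf : Integrable f μ)
    (hg : ∀ᵐ x ∂μ, |g x| ≤ A) : |∫ x, f x * g x ∂μ| ≤ A * ∫ x, |f x| ∂μ := by
  rw [← integral_const_mul, ← Real.norm_eq_abs]
  refine norm_integral_le_of_norm_le (f := fun x => f x * g x) (hf.abs.const_mul A) ?_
  filter_upwards [hg] with x hx
  rw [Real.norm_eq_abs, abs_mul, mul_comm]
  exact mul_le_mul_of_nonneg_right hx (abs_nonneg _)

lemma integrable_kernel_mul_mul (hV : Integrable (Function.uncurry V) (μ.prod ν))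
    {f : α → ℝ} {g : β → ℝ} (hf : MemLp f ⊤ μ) (hg : MemLp g ⊤ ν) :
    Integrable (fun z : α × β => V z.1 z.2 * f z.1 * g z.2) (μ.prod ν) :=
  have hVf : Integrable (fun z : α × β => V z.1 z.2 * f z.1) (μ.prod ν) :=
    hV.mul_bdd hf.1.comp_fst (Measure.quasiMeasurePreserving_fst.ae (ae_le_lpNorm_exponent_top hf))
  hVf.mul_bdd hg.1.comp_snd (Measure.quasiMeasurePreserving_snd.ae (ae_le_lpNorm_exponent_top hg))

lemma integrable_integral_kernel_mul [SFinite ν]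
    (hV : Integrable (Function.uncurry V) (μ.prod ν)) {g : β → ℝ} (hg : MemLp g ⊤ ν) :
    Integrable (fun x => ∫ y, V x y * g y ∂ν) μ := by
  simpa only [mul_one] using
    (integrable_kernel_mul_mul hV (memLp_top_const 1) hg).integral_prod_left

lemma kernelForm_eq_integral_mul (V : α → β → ℝ) (f : α → ℝ) (g : β → ℝ) :
    kernelForm μ ν V f g = ∫ x, (∫ y, V x y * g y ∂ν) * f x ∂μ := by
  simp only [kernelForm, ← integral_mul_const, mul_right_comm]

lemma kernelForm_const_mul_const_mul (V : α → β → ℝ) (f : α → ℝ) (g : β → ℝ) (A B : ℝ) :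
    kernelForm μ ν V (fun x => A * f x) (fun y => B * g y) = A * B * kernelForm μ ν V f g := by
  simp only [kernelForm, ← integral_const_mul]
  congr! 4
  ring

lemma kernelForm_sub_kernel [SFinite μ] [SFinite ν]
    (hV : Integrable (Function.uncurry V) (μ.prod ν))
    (hV' : Integrable (Function.uncurry V') (μ.prod ν))
    {f : α → ℝ} {g : β → ℝ} (hf : MemLp f ⊤ μ) (hg : MemLp g ⊤ ν) :
    kernelForm μ ν (fun x y => V x y - V' x y) f g =
      kernelForm μ ν V f g - kernelForm μ ν V' f g := by
  simp only [kernelForm, sub_mul]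
  exact integral_integral_sub (integrable_kernel_mul_mul hV hf hg)
    (integrable_kernel_mul_mul hV' hf hg)

lemma abs_kernelForm_le [SFinite μ] [SFinite ν] (hV : Integrable (Function.uncurry V) (μ.prod ν))
    {f : α → ℝ} {g : β → ℝ} {A B : ℝ} (hf : AEStronglyMeasurable f μ)
    (hg : AEStronglyMeasurable g ν) (hA : ∀ᵐ x ∂μ, |f x| ≤ A) (hB : ∀ᵐ y ∂ν, |g y| ≤ B) :
    |kernelForm μ ν V f g| ≤ A * B * ∫ z, |V z.1 z.2| ∂μ.prod ν := by
  have hint :=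
    integrable_kernel_mul_mul hV (memLp_top_of_bound hf A hA) (memLp_top_of_bound hg B hB)
  have hform : kernelForm μ ν V f g = ∫ z, V z.1 z.2 * (f z.1 * g z.2) ∂μ.prod ν := by
    simpa only [kernelForm, mul_assoc] using (integral_prod _ hint).symm
  rw [hform]
  refine abs_integral_mul_le hV ?_
  filter_upwards [Measure.quasiMeasurePreserving_fst.ae hA,
    Measure.quasiMeasurePreserving_snd.ae hB] with z hz₁ hz₂
  rw [abs_mul]
  exact mul_le_mul hz₁ hz₂ (abs_nonneg _) ((abs_nonneg _).trans hz₁)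

lemma integral_kernel_mul_add_sub_two_mul [SFinite μ] {V : α → α → ℝ}
    (hV : Integrable (Function.uncurry V) (μ.prod μ)) {p q : α → ℝ} (hp : MemLp p ⊤ μ)
    (hq : MemLp q ⊤ μ) :
    ∫ x, ∫ y, V x y * (p x + p y - 2 * q x * q y) ∂μ ∂μ =
      kernelForm μ μ V p 1 + kernelForm μ μ V 1 p - 2 * kernelForm μ μ V q q := by
  have h₁ : MemLp (1 : α → ℝ) ⊤ μ := memLp_top_const 1
  have hp₁ := integrable_kernel_mul_mul hV hp h₁
  have h₁p := integrable_kernel_mul_mul hV h₁ hp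
  have hpp : Integrable (fun z : α × α => V z.1 z.2 * p z.1 * 1 + V z.1 z.2 * 1 * p z.2)
      (μ.prod μ) := hp₁.add h₁p
  have hqq := (integrable_kernel_mul_mul hV hq hq).const_mul 2
  calc ∫ x, ∫ y, V x y * (p x + p y - 2 * q x * q y) ∂μ ∂μ
    _ = ∫ x, ∫ y, (V x y * p x * 1 + V x y * 1 * p y) - 2 * (V x y * q x * q y) ∂μ ∂μ := by
      congr! 4
      ring
    _ = _ := by
      rw [integral_integral_sub hpp hqq]
      simp only [integral_const_mul]
      exact congrArg (· - _) (integral_integral_add hp₁ h₁p)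

lemma integral_kernel_mul_sq_abs_sub [SFinite μ] {V : α → α → ℝ}
    (hV : Integrable (Function.uncurry V) (μ.prod μ)) {u : α → ℝ} (hu : MemLp u ⊤ μ) :
    ∫ x, ∫ y, V x y * |u x - u y| ^ 2 ∂μ ∂μ =
      kernelForm μ μ V (fun x => u x ^ 2) 1 + kernelForm μ μ V 1 (fun y => u y ^ 2) -
        2 * kernelForm μ μ V u u := by
  have hsq : MemLp (fun x => u x ^ 2) ⊤ μ := by
    simp only [sq]
    exact hu.mul hu
  rw [← integral_kernel_mul_add_sub_two_mul hV hsq hu]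
  congr! 5
  rw [sq_abs]
  ring

lemma integral_integral_sq_abs_sub {μ ν : Measure ℝ} [IsProbabilityMeasure μ]
    [IsProbabilityMeasure ν] (hμ : MemLp id 2 μ) (hν : MemLp id 2 ν) :
    ∫ t, ∫ s, |s - t| ^ 2 ∂μ ∂ν =
      ∫ s, s ^ 2 ∂μ + ∫ t, t ^ 2 ∂ν - 2 * (∫ s, s ∂μ) * ∫ t, t ∂ν := by
  have hexpand (m : Measure ℝ) [IsProbabilityMeasure m] (hm : MemLp id 2 m) (c d : ℝ) :
      ∫ s, (s ^ 2 - d * s + c) ∂m = ∫ s, s ^ 2 ∂m - d * ∫ s, s ∂m + c := by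
    have hsq : Integrable (fun s : ℝ => s ^ 2) m := hm.integrable_sq
    have hid : Integrable (fun s : ℝ => d * s) m := (hm.integrable one_le_two).const_mul d
    have hdiff : Integrable (fun s : ℝ => s ^ 2 - d * s) m := hsq.sub hid
    rw [integral_add hdiff (integrable_const c), integral_sub hsq hid,
      integral_const_mul, integral_const, probReal_univ, one_smul]
  have hinner (t : ℝ) : ∫ s, |s - t| ^ 2 ∂μ =
      t ^ 2 - 2 * (∫ s, s ∂μ) * t + ∫ s, s ^ 2 ∂μ := by
    have hpoly (s : ℝ) : |s - t| ^ 2 = s ^ 2 - 2 * t * s + t ^ 2 := by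
      rw [sq_abs]
      ring
    simp only [hpoly, hexpand μ hμ]
    ring
  simp only [hinner, hexpand ν hν]
  ring

namespace TendstoWeakStar

variable {a : ι → α → ℝ} {a₀ : α → ℝ} {A : ℝ} {b : ι → β → ℝ} {b₀ : β → ℝ} {B : ℝ}

lemma tendsto_integral_mul_of_tendsto_L1 (ha : TendstoWeakStar μ a l a₀)
    (ha_meas : ∀ i, AEStronglyMeasurable (a i) μ) (hA : ∀ i, ∀ᵐ x ∂μ, |a i x| ≤ A)
    {h : ι → α → ℝ} {h₀ : α → ℝ} (hh : ∀ i, Integrable (h i) μ) (hh₀ : Integrable h₀ μ)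
    (hlim : Tendsto (fun i => ∫ x, |h i x - h₀ x| ∂μ) l (nhds 0)) :
    Tendsto (fun i => ∫ x, h i x * a i x ∂μ) l (nhds (∫ x, h₀ x * a₀ x ∂μ)) := by
  have hdiff : Tendsto (fun i => ∫ x, (h i x - h₀ x) * a i x ∂μ) l (nhds 0) :=
    squeeze_zero_norm (fun i => abs_integral_mul_le ((hh i).sub hh₀) (hA i))
      (by simpa only [mul_zero] using hlim.const_mul A)
  have hsum := hdiff.add (ha h₀ hh₀)
  rw [zero_add] at hsum
  refine hsum.congr fun i => ?_
  simp only [sub_mul]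
  rw [integral_sub ((hh i).mul_bdd (ha_meas i) (hA i)) (hh₀.mul_bdd (ha_meas i) (hA i)),
    sub_add_cancel]

/- Almost every row `V x` is an admissible test function, which gives convergence of the integrals
for almost every `x`; the `L¹` norms of the rows are an integrable dominating function. -/
lemma tendsto_L1_integral_kernel_mul [SFinite μ] [SFinite ν] [l.IsCountablyGenerated]
    (hb : TendstoWeakStar ν b l b₀) (hV : Integrable (Function.uncurry V) (μ.prod ν))
    (hb_meas : ∀ i, AEStronglyMeasurable (b i) ν) (hB : ∀ i, ∀ᵐ y ∂ν, |b i y| ≤ B)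
    (hb₀ : MemLp b₀ ⊤ ν) :
    Tendsto (fun i => ∫ x, |∫ y, V x y * b i y ∂ν - ∫ y, V x y * b₀ y ∂ν| ∂μ) l (nhds 0) := by
  have hrow : ∀ᵐ x ∂μ, Integrable (V x) ν := hV.prod_right_ae
  have hdom : Integrable (fun x => ∫ y, |V x y| ∂ν) μ := hV.abs.integral_prod_left
  have hdiff (i : ι) : Integrable (fun x => ∫ y, V x y * b i y ∂ν - ∫ y, V x y * b₀ y ∂ν) μ :=
    (integrable_integral_kernel_mul hV (memLp_top_of_bound (hb_meas i) B (hB i))).sub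
      (integrable_integral_kernel_mul hV hb₀)
  have hlim := tendsto_integral_filter_of_dominated_convergence (l := l) (μ := μ)
    (F := fun i x => |∫ y, V x y * b i y ∂ν - ∫ y, V x y * b₀ y ∂ν|) (f := fun _ => 0)
    (fun x => B * ∫ y, |V x y| ∂ν + lpNorm b₀ ⊤ ν * ∫ y, |V x y| ∂ν)
    (Eventually.of_forall fun i => (hdiff i).abs.aestronglyMeasurable)
    (Eventually.of_forall fun i => ?_) ((hdom.const_mul _).add (hdom.const_mul _)) ?_
  · simpa only [integral_zero] using hlim
  · filter_upwards [hrow] with x hx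
    rw [Real.norm_eq_abs, abs_abs]
    exact (abs_sub _ _).trans (add_le_add (abs_integral_mul_le hx (hB i))
      (abs_integral_mul_le hx (ae_le_lpNorm_exponent_top hb₀)))
  · filter_upwards [hrow] with x hx
    simpa only [sub_self, abs_zero] using ((hb (V x) hx).sub_const (∫ y, V x y * b₀ y ∂ν)).abs

lemma tendsto_kernelForm [SFinite μ] [SFinite ν] [l.IsCountablyGenerated]
    (ha : TendstoWeakStar μ a l a₀) (hb : TendstoWeakStar ν b l b₀)
    (hV : Integrable (Function.uncurry V) (μ.prod ν))
    (ha_meas : ∀ i, AEStronglyMeasurable (a i) μ) (hA : ∀ i, ∀ᵐ x ∂μ, |a i x| ≤ A)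
    (hb_meas : ∀ i, AEStronglyMeasurable (b i) ν) (hB : ∀ i, ∀ᵐ y ∂ν, |b i y| ≤ B)
    (hb₀ : MemLp b₀ ⊤ ν) :
    Tendsto (fun i => kernelForm μ ν V (a i) (b i)) l (nhds (kernelForm μ ν V a₀ b₀)) := by
  simp only [kernelForm_eq_integral_mul]
  exact ha.tendsto_integral_mul_of_tendsto_L1 ha_meas hA
    (fun i => integrable_integral_kernel_mul hV (memLp_top_of_bound (hb_meas i) B (hB i)))
    (integrable_integral_kernel_mul hV hb₀)
    (hb.tendsto_L1_integral_kernel_mul hV hb_meas hB hb₀)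

end TendstoWeakStar

end General

/-- Lebesgue measure on `(0,1)`; reducible, so that integrals against it are those over `I01`. -/
abbrev volume01 : Measure ℝ := volume.restrict I01

instance : IsFiniteMeasure volume01 :=
  isFiniteMeasure_restrict.2 measure_Ioo_lt_top.ne

lemma integrableOn_I01_prod_iff {f : ℝ × ℝ → ℝ} :
    IntegrableOn f (I01 ×ˢ I01) ↔ Integrable f (volume01.prod volume01) := by
  rw [IntegrableOn, Measure.prod_restrict, Measure.volume_eq_prod]

lemma bddAbove_cutNorm {V : ℝ → ℝ → ℝ}
    (hV : Integrable (Function.uncurry V) (volume01.prod volume01)) :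
    BddAbove {r : ℝ | ∃ f g : ℝ → ℝ, Measurable f ∧ Measurable g ∧
      (∀ x, f x ∈ Set.Icc (-1 : ℝ) 1) ∧ (∀ x, g x ∈ Set.Icc (-1 : ℝ) 1) ∧
      r = |∫ x in I01, ∫ y in I01, V x y * f x * g y|} := by
  refine ⟨1 * 1 * ∫ z, |V z.1 z.2| ∂volume01.prod volume01, ?_⟩
  rintro _ ⟨f, g, hf, hg, hf₁, hg₁, rfl⟩
  exact abs_kernelForm_le hV hf.aestronglyMeasurable hg.aestronglyMeasurable
    (ae_of_all _ fun x => abs_le.2 (hf₁ x)) (ae_of_all _ fun y => abs_le.2 (hg₁ y))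

lemma abs_kernelForm_le_cutNorm {V : ℝ → ℝ → ℝ}
    (hV : Integrable (Function.uncurry V) (volume01.prod volume01)) {f g : ℝ → ℝ}
    (hf : Measurable f) (hg : Measurable g) {A B : ℝ} (hA : ∀ x, |f x| ≤ A)
    (hB : ∀ y, |g y| ≤ B) :
    |kernelForm volume01 volume01 V f g| ≤ A * B * cutNorm V := by
  have hrescale {h : ℝ → ℝ} {C : ℝ} (hC : ∀ x, |h x| ≤ C) :
      (∀ x, h x / C ∈ Set.Icc (-1 : ℝ) 1) ∧ h = fun x => C * (h x / C) := by
    have hC₀ : 0 ≤ C := (abs_nonneg _).trans (hC 0)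
    refine ⟨fun x => abs_le.1 ?_, funext fun x => ?_⟩
    · rw [abs_div, abs_of_nonneg hC₀]
      exact div_le_one_of_le₀ (hC x) hC₀
    · refine (mul_div_cancel_of_imp' fun hC_zero => ?_).symm
      exact abs_nonpos_iff.1 (hC_zero ▸ hC x)
  obtain ⟨hf₁, hfA⟩ := hrescale hA
  obtain ⟨hg₁, hgB⟩ := hrescale hB
  have hAB : 0 ≤ A * B := mul_nonneg ((abs_nonneg _).trans (hA 0)) ((abs_nonneg _).trans (hB 0))
  rw [hfA, hgB, kernelForm_const_mul_const_mul, abs_mul, abs_of_nonneg hAB]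
  exact mul_le_mul_of_nonneg_left (le_csSup (bddAbove_cutNorm hV)
    ⟨_, _, hf.div_const A, hg.div_const B, hf₁, hg₁, rfl⟩) hAB

lemma tendsto_kernelForm_of_tendsto_cutNorm {ι : Type*} {l : Filter ι} [l.IsCountablyGenerated]
    {Ws : ι → ℝ → ℝ → ℝ} {W : ℝ → ℝ → ℝ}
    (hWs : ∀ i, Integrable (Function.uncurry (Ws i)) (volume01.prod volume01))
    (hW : Integrable (Function.uncurry W) (volume01.prod volume01))
    (hcut : Tendsto (fun i => cutNorm (fun x y => Ws i x y - W x y)) l (nhds 0))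
    {a b : ι → ℝ → ℝ} {a₀ b₀ : ℝ → ℝ} {A B : ℝ} (ha : TendstoWeakStar volume01 a l a₀)
    (hb : TendstoWeakStar volume01 b l b₀) (ha_meas : ∀ i, Measurable (a i))
    (hb_meas : ∀ i, Measurable (b i)) (hA : ∀ i x, |a i x| ≤ A) (hB : ∀ i y, |b i y| ≤ B)
    (hb₀ : MemLp b₀ ⊤ volume01) :
    Tendsto (fun i => kernelForm volume01 volume01 (Ws i) (a i) (b i)) l
      (nhds (kernelForm volume01 volume01 W a₀ b₀)) := by
  have hdiff : Tendsto (fun i => kernelForm volume01 volume01 (fun x y => Ws i x y - W x y)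
      (a i) (b i)) l (nhds 0) :=
    squeeze_zero_norm
      (fun i => abs_kernelForm_le_cutNorm (V := fun x y => Ws i x y - W x y) ((hWs i).sub hW)
        (ha_meas i) (hb_meas i) (hA i) (hB i))
      (by simpa only [mul_zero] using hcut.const_mul (A * B))
  have hlim := ha.tendsto_kernelForm hb hW (fun i => (ha_meas i).aestronglyMeasurable)
    (fun i => ae_of_all _ (hA i)) (fun i => (hb_meas i).aestronglyMeasurable)
    (fun i => ae_of_all _ (hB i)) hb₀
  have hsum := hdiff.add hlim
  rw [zero_add] at hsum
  refine hsum.congr fun i => ?_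
  rw [kernelForm_sub_kernel (hWs i) hW
    (memLp_top_of_bound (ha_meas i).aestronglyMeasurable A (ae_of_all _ (hA i)))
    (memLp_top_of_bound (hb_meas i).aestronglyMeasurable B (ae_of_all _ (hB i))), sub_add_cancel]

lemma exists_continuous_bounded_eqOn_Icc {f : ℝ → ℝ} {a b : ℝ} (hab : a ≤ b)
    (hf : ContinuousOn f (Set.Icc a b)) :
    ∃ f' : ℝ → ℝ, Continuous f' ∧ (∃ A, ∀ s, |f' s| ≤ A) ∧ Set.EqOn f' f (Set.Icc a b) := by
  obtain ⟨A, hA⟩ := isCompact_Icc.exists_bound_of_continuousOn hf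
  exact ⟨Set.IccExtend hab ((Set.Icc a b).domRestrict f), hf.domRestrict.Icc_extend',
    ⟨A, fun s => hA _ (Set.projIcc a b hab s).2⟩, fun s hs => Set.IccExtend_of_mem hab _ hs⟩

lemma IsYoungMeasure.measurable_integral {ν : ℝ → Measure ℝ} (hν : IsYoungMeasure ν)
    {f : ℝ → ℝ} (hf : Measurable f) : Measurable fun x => ∫ s, f s ∂ν x :=
  (hf.stronglyMeasurable.integral_kernel (κ := ⟨ν, hν.1⟩)).measurable

lemma IsYoungMeasure.memLp_top_integral {ν : ℝ → Measure ℝ} (hν : IsYoungMeasure ν)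
    {f : ℝ → ℝ} (hf : Measurable f) {A : ℝ}
    (hA : ∀ᵐ x ∂volume01, ∀ᵐ s ∂ν x, |f s| ≤ A) :
    MemLp (fun x => ∫ s, f s ∂ν x) ⊤ volume01 := by
  refine memLp_top_of_bound (hν.measurable_integral hf).aestronglyMeasurable A ?_
  filter_upwards [hA] with x hx
  have := hν.2 x
  simpa only [probReal_univ, mul_one] using norm_integral_le_of_norm_le_const (f := f) hx

namespace NarrowConv

variable {u : ℕ → ℝ → ℝ} {ν : ℝ → Measure ℝ}

lemma ae_ae_mem_of_isClosed (hnarrow : NarrowConv (fun n => deltaYM (u n)) ν)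
    (hν : IsYoungMeasure ν) {K : Set ℝ} (hK : IsClosed K) (hu : ∀ n x, u n x ∈ K) :
    ∀ᵐ x ∂volume01, ∀ᵐ s ∂ν x, s ∈ K := by
  let f : ℝ → ℝ := fun s => min 1 (Metric.infDist s K)
  have hf : Continuous f := continuous_const.min (Metric.continuous_infDist_pt K)
  have hf₀ (s : ℝ) : 0 ≤ f s := le_min zero_le_one Metric.infDist_nonneg
  have hf₁ (s : ℝ) : |f s| ≤ 1 := (abs_of_nonneg (hf₀ s)).trans_le (min_le_left _ _)
  have hfK {s : ℝ} : f s = 0 ↔ s ∈ K := by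
    rw [hK.mem_iff_infDist_zero ⟨u 0 0, hu 0 0⟩]
    grind [Metric.infDist_nonneg]
  have hlim := hnarrow f hf ⟨1, hf₁⟩ (fun _ => 1) (integrable_const (μ := volume01) 1)
  simp only [deltaYM, integral_dirac, hfK.2 (hu _ _), one_mul, integral_zero] at hlim
  have hmean : ∫ x in I01, ∫ s, f s ∂ν x = 0 := tendsto_nhds_unique hlim tendsto_const_nhds
  have hmean_int : Integrable (fun x => ∫ s, f s ∂ν x) volume01 :=
    (hν.memLp_top_integral hf.measurable
      (ae_of_all _ fun x => ae_of_all _ hf₁)).integrable le_top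
  filter_upwards [(integral_eq_zero_iff_of_nonneg (fun x => integral_nonneg hf₀) hmean_int).1 hmean]
    with x hx
  have := hν.2 x
  have hf_int : Integrable f (ν x) :=
    Integrable.of_bound hf.aestronglyMeasurable 1 (ae_of_all _ hf₁)
  filter_upwards [(integral_eq_zero_iff_of_nonneg hf₀ hf_int).1 hx] with s hs using hfK.1 hs

lemma tendstoWeakStar_comp (hnarrow : NarrowConv (fun n => deltaYM (u n)) ν)
    (hν : IsYoungMeasure ν) {a b : ℝ} (hu : ∀ n x, u n x ∈ Set.Icc a b) {f : ℝ → ℝ}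
    (hf : ContinuousOn f (Set.Icc a b)) :
    TendstoWeakStar volume01 (fun n x => f (u n x)) atTop (fun x => ∫ s, f s ∂ν x) := by
  intro g hg
  obtain ⟨f', hf', hbdd, heq⟩ :=
    exists_continuous_bounded_eqOn_Icc ((hu 0 0).1.trans (hu 0 0).2) hf
  have hlim := hnarrow f' hf' hbdd g hg
  simp only [deltaYM, integral_dirac, heq (hu _ _)] at hlim
  convert hlim using 2
  refine integral_congr_ae ?_
  filter_upwards [hnarrow.ae_ae_mem_of_isClosed hν isClosed_Icc hu] with x hx
  rw [integral_congr_ae (hx.mono heq)]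

lemma tendsto_kernelForm_comp (hnarrow : NarrowConv (fun n => deltaYM (u n)) ν)
    (hν : IsYoungMeasure ν) (hu : ∀ n, Measurable (u n)) {c d : ℝ}
    (hcd : ∀ n x, u n x ∈ Set.Icc c d) {Ws : ℕ → ℝ → ℝ → ℝ} {W : ℝ → ℝ → ℝ}
    (hWs : ∀ n, Integrable (Function.uncurry (Ws n)) (volume01.prod volume01))
    (hW : Integrable (Function.uncurry W) (volume01.prod volume01))
    (hcut : Tendsto (fun n => cutNorm (fun x y => Ws n x y - W x y)) atTop (nhds 0))
    {f g : ℝ → ℝ} (hf : Continuous f) (hg : Continuous g) :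
    Tendsto (fun n => kernelForm volume01 volume01 (Ws n) (fun x => f (u n x))
        (fun y => g (u n y))) atTop
      (nhds (kernelForm volume01 volume01 W (fun x => ∫ s, f s ∂ν x)
        (fun y => ∫ t, g t ∂ν y))) := by
  obtain ⟨A, hA⟩ := isCompact_Icc.exists_bound_of_continuousOn (s := Set.Icc c d) hf.continuousOn
  obtain ⟨B, hB⟩ := isCompact_Icc.exists_bound_of_continuousOn (s := Set.Icc c d) hg.continuousOn
  have hsupp := hnarrow.ae_ae_mem_of_isClosed hν isClosed_Icc hcd
  exact tendsto_kernelForm_of_tendsto_cutNorm hWs hW hcut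
    (hnarrow.tendstoWeakStar_comp hν hcd hf.continuousOn)
    (hnarrow.tendstoWeakStar_comp hν hcd hg.continuousOn)
    (fun n => hf.measurable.comp (hu n)) (fun n => hg.measurable.comp (hu n))
    (fun n x => hA _ (hcd n x)) (fun n y => hB _ (hcd n y))
    (hν.memLp_top_integral hg.measurable (hsupp.mono fun _ hx => hx.mono hB))

lemma integral_kernel_mul_integral_sq_abs_sub (hnarrow : NarrowConv (fun n => deltaYM (u n)) ν)
    (hν : IsYoungMeasure ν) {C : ℝ} (hC : ∀ n x, |u n x| ≤ C) {W : ℝ → ℝ → ℝ}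
    (hW : Integrable (Function.uncurry W) (volume01.prod volume01)) :
    ∫ x in I01, ∫ y in I01, W x y * ∫ t, (∫ s, |s - t| ^ 2 ∂(ν x)) ∂(ν y) =
      kernelForm volume01 volume01 W (fun x => ∫ s, s ^ 2 ∂ν x) 1 +
        kernelForm volume01 volume01 W 1 (fun y => ∫ t, t ^ 2 ∂ν y) -
        2 * kernelForm volume01 volume01 W (fun x => ∫ s, s ∂ν x) (fun y => ∫ t, t ∂ν y) := by
  have hprob := hν.2
  have hsupp : ∀ᵐ x ∂volume01, ∀ᵐ s ∂ν x, |s| ≤ C := by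
    simpa only [Set.mem_Icc, ← abs_le] using
      hnarrow.ae_ae_mem_of_isClosed hν isClosed_Icc fun n x => abs_le.1 (hC n x)
  have hmem : ∀ᵐ x ∂volume01, MemLp id 2 (ν x) := by
    filter_upwards [hsupp] with x hx using MemLp.of_bound aestronglyMeasurable_id C hx
  have hsq (x : ℝ) (hx : ∀ᵐ s ∂ν x, |s| ≤ C) : ∀ᵐ s ∂ν x, |s ^ 2| ≤ C ^ 2 :=
    hx.mono fun s hs => (abs_pow s 2).trans_le (pow_le_pow_left₀ (abs_nonneg s) hs 2)
  have hmean_sq : MemLp (fun x => ∫ s, s ^ 2 ∂ν x) ⊤ volume01 :=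
    hν.memLp_top_integral (measurable_id.pow_const 2) (hsupp.mono hsq)
  have hmean : MemLp (fun x => ∫ s, s ∂ν x) ⊤ volume01 := hν.memLp_top_integral measurable_id hsupp
  rw [← integral_kernel_mul_add_sub_two_mul hW hmean_sq hmean]
  refine integral_congr_ae (hmem.mono fun x hx => integral_congr_ae (hmem.mono fun y hy => ?_))
  simp only [integral_integral_sq_abs_sub hx hy]

end NarrowConv

theorem dirichlet_energy_convergence_general
    (Wseq : ℕ → ℝ → ℝ → ℝ)
    (hWseqInt : ∀ n, IntegrableOn (Function.uncurry (Wseq n)) (I01 ×ˢ I01))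
    (W : ℝ → ℝ → ℝ) (hWint : IntegrableOn (Function.uncurry W) (I01 ×ˢ I01))
    (hcut : Tendsto (fun n => cutNorm (fun x y => Wseq n x y - W x y)) atTop (nhds 0))
    (u : ℕ → ℝ → ℝ) (hu : ∀ n, Measurable (u n))
    (hub : ∃ C : ℝ, ∀ n x, |u n x| ≤ C)
    (ν : ℝ → Measure ℝ) (hν : IsYoungMeasure ν)
    (hnarrow : NarrowConv (fun n => deltaYM (u n)) ν) :
    Tendsto
      (fun n => ∫ x in I01, ∫ y in I01, Wseq n x y * |u n x - u n y| ^ 2)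
      atTop
      (nhds (∫ x in I01, ∫ y in I01,
        W x y * ∫ t, (∫ s, |s - t| ^ 2 ∂(ν x)) ∂(ν y))) := by
  simp only [integrableOn_I01_prod_iff] at hWseqInt hWint
  obtain ⟨C, hC⟩ := hub
  have hprob := hν.2
  have hu_mem (n : ℕ) : MemLp (u n) ⊤ volume01 :=
    memLp_top_of_bound (hu n).aestronglyMeasurable C (ae_of_all _ (hC n))
  have hform {f g : ℝ → ℝ} (hf : Continuous f) (hg : Continuous g) :=
    hnarrow.tendsto_kernelForm_comp hν hu (fun n x => abs_le.1 (hC n x)) hWseqInt hWint hcut hf hg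
  have hmass : (fun x => ∫ _, (1 : ℝ) ∂ν x) = 1 := by
    ext x
    simp only [integral_const, probReal_univ, one_smul, Pi.one_apply]
  have hsq_one := hform (continuous_pow 2) (continuous_const (y := 1))
  have hone_sq := hform (continuous_const (y := 1)) (continuous_pow 2)
  have hid_id := hform continuous_id continuous_id
  rw [hmass] at hsq_one hone_sq
  rw [hnarrow.integral_kernel_mul_integral_sq_abs_sub hν hC hWint]
  simp only [integral_kernel_mul_sq_abs_sub (hWseqInt _) (hu_mem _)]
  exact (hsq_one.add hone_sq).sub (hid_id.const_mul 2)

/-- Convergence of the graph Dirichlet energies to the graphon Dirichlet energy. -/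
theorem dirichlet_energy_convergence
    (Wseq : ℕ → ℝ → ℝ → ℝ)
    (hWseqMeas : ∀ n, Measurable (Function.uncurry (Wseq n)))
    (hWseqNonneg : ∀ n x y, 0 ≤ Wseq n x y)
    (hWseqSymm : ∀ n x y, Wseq n x y = Wseq n y x)
    (hWseqInt : ∀ n, IntegrableOn (Function.uncurry (Wseq n)) (I01 ×ˢ I01))
    (hWseqBd : ∃ C : ℝ, ∀ n, (∫ x in I01, ∫ y in I01, |Wseq n x y|) ≤ C)
    (W : ℝ → ℝ → ℝ) (hWmeas : Measurable (Function.uncurry W))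
    (hWnonneg : ∀ x y, 0 ≤ W x y) (hWsymm : ∀ x y, W x y = W y x)
    (hWint : IntegrableOn (Function.uncurry W) (I01 ×ˢ I01))
    (hcut : Tendsto (fun n => cutNorm (fun x y => Wseq n x y - W x y)) atTop (nhds 0))
    (u : ℕ → ℝ → ℝ) (hu : ∀ n, Measurable (u n))
    (hub : ∃ C : ℝ, ∀ n x, |u n x| ≤ C)
    (ν : ℝ → Measure ℝ) (hν : IsYoungMeasure ν)
    (hnarrow : NarrowConv (fun n => deltaYM (u n)) ν) :
    Tendsto
      (fun n => ∫ x in I01, ∫ y in I01, Wseq n x y * |u n x - u n y| ^ 2)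
      atTop
      (nhds (∫ x in I01, ∫ y in I01,
        W x y * ∫ t, (∫ s, |s - t| ^ 2 ∂(ν x)) ∂(ν y))) := by
  exact dirichlet_energy_convergence_general Wseq hWseqInt W hWint hcut u hu hub ν hν hnarrow
end
end
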